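/- Let n ≥ 1 and define γ : [−π, π] → ℂ by γ(α) = e^{iα} (1 − (1 − e^{−iα})/n)^n. Then the image Πd(SU(n)) = {Πd(U) : U ∈ SU(n)} is a compact subset of ℂ whose topological frontier (boundary in ℂ) equals the image γ([−π, π]) of the curve γ. -/

import Mathlib

open Matrix Complex Real

/-!
For `u` in the `n`-torus let `Φ(u) = (∏ uⱼ)⁻¹ (∑ uⱼ / n)ⁿ`. Conjugating `diag u` by the Fourier
matrix makes its diagonal constant, so after a change of determinant `Φ(u)` is a diagonal product
of `SU(n)`. Conversely, rotating the rows of `U ∈ SU(n)` so that its diagonal becomes nonnegative,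
the arithmetic-geometric mean inequality shows that every diagonal product lies on a segment from
`0` to some `Φ(u)`.

If the entries of `u` are not all equal up to one exception, then they can be varied with their
product fixed so that their sum fills a neighbourhood; hence the frontier of the range of `Φ` is
contained in the set of the `Φ(a, …, a, b)`, which is the curve `γ`. For `n ≥ 3` the argument of
`γ` increases strictly over one turn, so each ray from `0` meets `γ` at most once. Thus a segment
from `0` to a point of the range of `Φ` cannot leave that range, which is therefore the set of
diagonal products, and every point of `γ` lies on its frontier. For `n ≤ 2` everything is real and
explicit.
-/

section RadialBoundary

variable {E : Type*}

lemma nonempty_inter_frontier_of_isPreconnected [TopologicalSpace E] {s Q : Set E}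
    (hs : IsPreconnected s) (hin : (s ∩ Q).Nonempty) (hout : (s ∩ Qᶜ).Nonempty) :
    (s ∩ frontier Q).Nonempty := by
  by_contra hempty
  rw [Set.not_nonempty_iff_eq_empty, ← Set.disjoint_iff_inter_eq_empty] at hempty
  have hint : s ∩ Q ⊆ interior Q := fun x hx => by
    by_contra h
    exact hempty.notMem_of_mem_left hx.1 ⟨subset_closure hx.2, h⟩
  have hext : s ∩ Qᶜ ⊆ (closure Q)ᶜ := fun x hx h =>
    hempty.notMem_of_mem_left hx.1 ⟨h, fun h' => hx.2 (interior_subset h')⟩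
  have hcover : s ⊆ interior Q ∪ (closure Q)ᶜ := fun x hx => by
    by_cases h : x ∈ Q
    exacts [.inl (hint ⟨hx, h⟩), .inr (hext ⟨hx, h⟩)]
  obtain ⟨x, -, hxi, hxe⟩ := hs _ _ isOpen_interior isClosed_closure.isOpen_compl hcover
    (hin.mono fun x hx => ⟨hx.1, hint hx⟩) (hout.mono fun x hx => ⟨hx.1, hext hx⟩)
  exact hxe (subset_closure (interior_subset hxi))

lemma exists_smul_mem_frontier [TopologicalSpace E] [SMul ℝ E] [ContinuousSMul ℝ E]
    {Q : Set E} {x : E} {a b s t : ℝ} (hs : s ∈ Set.Icc a b) (ht : t ∈ Set.Icc a b)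
    (hin : s • x ∈ Q) (hout : t • x ∉ Q) : ∃ r ∈ Set.Icc a b, r • x ∈ frontier Q := by
  have hconn : IsPreconnected ((· • x) '' Set.Icc a b) :=
    isPreconnected_Icc.image _ (by fun_prop)
  obtain ⟨_, ⟨r, hr, rfl⟩, hfr⟩ := nonempty_inter_frontier_of_isPreconnected hconn
    ⟨_, ⟨s, hs, rfl⟩, hin⟩ ⟨_, ⟨t, ht, rfl⟩, hout⟩
  exact ⟨r, hr, hfr⟩

lemma zero_notMem_of_smul_mem_imp_eq_one [AddCommGroup E] [Module ℝ E] {Γ : Set E}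
    (hray : ∀ x ∈ Γ, ∀ r : ℝ, 0 < r → r • x ∈ Γ → r = 1) : (0 : E) ∉ Γ := fun h0 => by
  have := hray 0 h0 2 two_pos (by rwa [smul_zero])
  norm_num at this

/-- A radius leaving `Q` and coming back would meet `frontier Q` twice. -/
lemma starConvex_zero_of_frontier_subset [AddCommGroup E] [Module ℝ E] [TopologicalSpace E]
    [ContinuousSMul ℝ E] {Q Γ : Set E} (hQ : IsClosed Q) (h0 : (0 : E) ∈ Q)
    (hfr : frontier Q ⊆ Γ) (hray : ∀ x ∈ Γ, ∀ r : ℝ, 0 < r → r • x ∈ Γ → r = 1) :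
    StarConvex ℝ 0 Q := by
  refine starConvex_zero_iff.2 fun x hx r hr0 hr1 => ?_
  by_contra hout
  obtain ⟨s, hs, hsfr⟩ := exists_smul_mem_frontier (x := x) (Set.left_mem_Icc.2 hr0)
    (Set.right_mem_Icc.2 hr0) (by rwa [zero_smul]) hout
  obtain ⟨t, ht, htfr⟩ := exists_smul_mem_frontier (x := x) (Set.right_mem_Icc.2 hr1)
    (Set.left_mem_Icc.2 hr1) (by rwa [one_smul]) hout
  have hs0 : 0 < s := hs.1.lt_of_ne' fun h =>
    zero_notMem_of_smul_mem_imp_eq_one hray (by simpa [h] using hfr hsfr)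
  have hts : t / s = 1 := hray _ (hfr hsfr) _ (div_pos (hs0.trans_le (hs.2.trans ht.1)) hs0)
    (by rw [smul_smul, div_mul_cancel₀ _ hs0.ne']; exact hfr htfr)
  have hsr : s = r := hs.2.antisymm (ht.1.trans_eq ((div_eq_one_iff_eq hs0.ne').1 hts))
  exact hout (hQ.frontier_subset (hsr ▸ hsfr))

lemma exists_one_le_smul_notMem_of_isBounded [NormedAddCommGroup E] [NormedSpace ℝ E] {Q : Set E}
    (hQ : Bornology.IsBounded Q) {x : E} (hx : x ≠ 0) : ∃ r : ℝ, 1 ≤ r ∧ r • x ∉ Q := by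
  obtain ⟨M, hM⟩ := hQ.exists_norm_le
  refine ⟨max 1 (M / ‖x‖ + 1), le_max_left _ _, fun hmem => ?_⟩
  have hle : max 1 (M / ‖x‖ + 1) * ‖x‖ ≤ M := by
    simpa [norm_smul, abs_of_pos (zero_lt_one.trans_le (le_max_left (1 : ℝ) _))] using hM _ hmem
  have := (le_max_right _ _).trans ((le_div_iff₀ (norm_pos_iff.2 hx)).2 hle)
  linarith

/-- Follow the ray through a point of `Γ` until it leaves `Q`. -/
lemma frontier_eq_of_frontier_subset [NormedAddCommGroup E] [NormedSpace ℝ E] {Q Γ : Set E}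
    (hQ : Bornology.IsBounded Q) (hΓ : Γ ⊆ Q) (hfr : frontier Q ⊆ Γ)
    (hray : ∀ x ∈ Γ, ∀ r : ℝ, 0 < r → r • x ∈ Γ → r = 1) : frontier Q = Γ := by
  refine hfr.antisymm fun x hx => ?_
  have hx0 : x ≠ 0 := ne_of_mem_of_not_mem hx (zero_notMem_of_smul_mem_imp_eq_one hray)
  obtain ⟨r, hr, hout⟩ := exists_one_le_smul_notMem_of_isBounded hQ hx0
  obtain ⟨t, ht, htfr⟩ := exists_smul_mem_frontier (Set.left_mem_Icc.2 hr)
    (Set.right_mem_Icc.2 hr) (by rw [one_smul]; exact hΓ hx) hout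
  have ht1 : t = 1 := hray x hx t (zero_lt_one.trans_le ht.1) (hfr htfr)
  rwa [ht1, one_smul] at htfr

end RadialBoundary

section BoundaryCurve

/-- The curve `γ` of the theorem, on all of `ℝ`. -/
noncomputable def boundaryCurve (n : ℕ) (α : ℝ) : ℂ :=
  cexp (I * α) * (1 - (1 - cexp (-(I * α))) / n) ^ n

/-- A continuous argument of `boundaryCurve n` for `n ≥ 3`: the arctangent is the argument of
`n - 1 + exp (iα)`. -/
noncomputable def boundaryAngle (n : ℕ) (α : ℝ) : ℝ :=
  α - n * Real.arctan (Real.sin α / (n - 1 + Real.cos α))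

lemma eq_norm_mul_circleExp_arctan {z : ℂ} (hz : 0 < z.re) :
    z = ‖z‖ * (Circle.exp (Real.arctan (z.im / z.re)) : ℂ) := by
  have harg := abs_lt.1 (abs_arg_lt_pi_div_two_iff.2 (.inl hz))
  rw [← tan_arg, Real.arctan_tan harg.1 harg.2, Circle.coe_exp, norm_mul_exp_arg_mul_I]

lemma boundaryCurve_eq_circleExp (n : ℕ) (α : ℝ) : boundaryCurve n α =
    (Circle.exp α : ℂ) * (1 - (1 - (Circle.exp α : ℂ)⁻¹) / n) ^ n := by
  rw [boundaryCurve, Complex.exp_neg, Circle.coe_exp, mul_comm I]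

lemma boundaryCurve_periodic (n : ℕ) : Function.Periodic (boundaryCurve n) (2 * π) := fun α => by
  simp only [boundaryCurve_eq_circleExp, Circle.exp_add_two_pi]

lemma image_boundaryCurve_Icc (n : ℕ) :
    boundaryCurve n '' Set.Icc (-π) π = Set.range (boundaryCurve n) := by
  have h := (boundaryCurve_periodic n).image_Icc Real.two_pi_pos (-π)
  rwa [show -π + 2 * π = π by ring] at h

lemma exists_pos_boundaryCurve_eq {n : ℕ} (hn : 3 ≤ n) (α : ℝ) :
    ∃ ρ : ℝ, 0 < ρ ∧ boundaryCurve n α = ρ * Circle.exp (boundaryAngle n α) := by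
  have hn' : (3 : ℝ) ≤ n := by exact_mod_cast hn
  set z : ℂ := n - 1 + Circle.exp α with hz
  have hre : z.re = n - 1 + Real.cos α := by simp [hz, Circle.coe_exp, exp_ofReal_mul_I_re]
  have him : z.im = Real.sin α := by simp [hz, Circle.coe_exp, exp_ofReal_mul_I_im]
  have hα0 : (Circle.exp α : ℂ) ≠ 0 := Circle.coe_ne_zero _
  have hpos : 0 < z.re := by linarith [Real.neg_one_le_cos α]
  have hn0 : (n : ℂ) ≠ 0 := by norm_cast; lia
  set w := Circle.exp (Real.arctan (z.im / z.re)) with hw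
  have hconj : (1 - (1 - (Circle.exp α : ℂ)⁻¹) / n) = ((‖z‖ / n : ℝ) : ℂ) * (w : ℂ)⁻¹ := by
    have h := congrArg (starRingEnd ℂ) (eq_norm_mul_circleExp_arctan hpos)
    rw [← hw, map_mul, conj_ofReal, ← Circle.coe_inv_eq_conj, Circle.coe_inv] at h
    rw [ofReal_div, ofReal_natCast, div_mul_eq_mul_div, ← h, hz, map_add, map_sub, map_natCast,
      map_one, ← Circle.coe_inv_eq_conj, Circle.coe_inv]
    generalize (Circle.exp α : ℂ) = e at hα0 ⊢
    field_simp
    ring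
  refine ⟨(‖z‖ / n) ^ n, ?_, ?_⟩
  · have : 0 < ‖z‖ := norm_pos_iff.2 fun h => by simp [h] at hpos
    positivity
  · rw [boundaryCurve_eq_circleExp, hconj, boundaryAngle, ← hre, ← him, Circle.exp_sub,
      Circle.exp_natCast_mul, ← hw]
    push_cast
    rw [mul_pow, inv_pow]
    ring

lemma hasDerivAt_boundaryAngle {n : ℕ} (hn : 3 ≤ n) (α : ℝ) :
    HasDerivAt (boundaryAngle n) ((n - 1) * (n - 2) * (1 - Real.cos α) /
      ((n - 1 + Real.cos α) ^ 2 + Real.sin α ^ 2)) α := by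
  have hn' : (3 : ℝ) ≤ n := by exact_mod_cast hn
  have hc : 0 < (n : ℝ) - 1 + Real.cos α := by linarith [Real.neg_one_le_cos α]
  have harctan := (((Real.hasDerivAt_sin α).div
    ((Real.hasDerivAt_cos α).const_add ((n : ℝ) - 1)) hc.ne').arctan).const_mul (n : ℝ)
  refine ((hasDerivAt_id α).sub harctan).congr_deriv ?_
  have hsq : 1 + (Real.sin α / (n - 1 + Real.cos α)) ^ 2 =
      ((n - 1 + Real.cos α) ^ 2 + Real.sin α ^ 2) / (n - 1 + Real.cos α) ^ 2 := by field_simp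
  have hden : (n - 1 + Real.cos α) ^ 2 + Real.sin α ^ 2 ≠ 0 := by positivity
  rw [Pi.div_apply, hsq]
  field_simp
  linear_combination (1 - (n : ℝ)) * Real.sin_sq_add_cos_sq α

lemma strictMonoOn_boundaryAngle {n : ℕ} (hn : 3 ≤ n) :
    StrictMonoOn (boundaryAngle n) (Set.Icc 0 (2 * π)) := by
  have hn' : (3 : ℝ) ≤ n := by exact_mod_cast hn
  refine strictMonoOn_of_deriv_pos (convex_Icc _ _)
    (fun α _ => (hasDerivAt_boundaryAngle hn α).continuousAt.continuousWithinAt) fun α hα => ?_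
  rw [interior_Icc] at hα
  have hcos : Real.cos α < 1 := (Real.cos_le_one α).lt_of_ne fun h => hα.1.ne'
    ((Real.cos_eq_one_iff_of_lt_of_lt (by linarith [hα.1, Real.pi_pos]) hα.2).1 h)
  have hc : 0 < (n : ℝ) - 1 + Real.cos α := by linarith [Real.neg_one_le_cos α]
  rw [(hasDerivAt_boundaryAngle hn α).deriv]
  exact div_pos (mul_pos (mul_pos (by linarith) (by linarith)) (sub_pos.2 hcos)) (by positivity)

lemma mapsTo_boundaryAngle {n : ℕ} (hn : 3 ≤ n) :
    Set.MapsTo (boundaryAngle n) (Set.Ico 0 (2 * π)) (Set.Ico 0 (2 * π)) := fun α hα => by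
  have hmono := strictMonoOn_boundaryAngle hn
  have h0 : boundaryAngle n 0 = 0 := by simp [boundaryAngle]
  have h2π : boundaryAngle n (2 * π) = 2 * π := by simp [boundaryAngle]
  have hα' := Set.Ico_subset_Icc_self hα
  exact ⟨h0 ▸ hmono.monotoneOn (Set.left_mem_Icc.2 two_pi_pos.le) hα' hα.1,
    h2π ▸ hmono hα' (Set.right_mem_Icc.2 two_pi_pos.le) hα.2⟩

lemma ofReal_mul_circle_inj {ρ σ : ℝ} (hρ : 0 < ρ) (hσ : 0 < σ) {z w : Circle}
    (h : (ρ : ℂ) * z = σ * w) : z = w := by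
  have hnorm : ρ = σ := by simpa [abs_of_pos, hρ, hσ, Circle.norm_coe] using congrArg norm h
  rw [hnorm] at h
  exact Circle.ext (mul_left_cancel₀ (ofReal_ne_zero.2 hσ.ne') h)

lemma eq_one_of_smul_mem_range_boundaryCurve {n : ℕ} (hn : 3 ≤ n) :
    ∀ z ∈ Set.range (boundaryCurve n), ∀ r : ℝ, 0 < r →
      r • z ∈ Set.range (boundaryCurve n) → r = 1 := by
  intro z hz r hr hrz
  have himage : Set.range (boundaryCurve n) = boundaryCurve n '' Set.Ico 0 (2 * π) :=
    ((Set.image_subset_range _ _).antisymm <| Set.range_subset_iff.2 fun α =>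
      let ⟨β, hβ, h⟩ := (boundaryCurve_periodic n).exists_mem_Ico₀ Real.two_pi_pos α
      ⟨β, hβ, h.symm⟩).symm
  rw [himage] at hz hrz
  obtain ⟨α, hα, rfl⟩ := hz
  obtain ⟨β, hβ, hβα⟩ := hrz
  obtain ⟨ρ, hρ, hαρ⟩ := exists_pos_boundaryCurve_eq hn α
  obtain ⟨σ, hσ, hβσ⟩ := exists_pos_boundaryCurve_eq hn β
  have hexp : Circle.exp (boundaryAngle n β) = Circle.exp (boundaryAngle n α) :=
    ofReal_mul_circle_inj hσ (mul_pos hr hρ) <| by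
      rw [← hβσ, hβα, hαρ, real_smul, ofReal_mul, mul_assoc]
  have hangle := Circle.exp_injOn_Ico (by simp) (mapsTo_boundaryAngle hn hβ)
    (mapsTo_boundaryAngle hn hα) hexp
  have hβα_eq : β = α := (strictMonoOn_boundaryAngle hn).injOn
    (Set.Ico_subset_Icc_self hβ) (Set.Ico_subset_Icc_self hα) hangle
  have hne : boundaryCurve n α ≠ 0 := by simp [hαρ, hρ.ne']
  rw [hβα_eq, real_smul, eq_comm, mul_eq_right₀ hne] at hβα
  exact_mod_cast hβα

end BoundaryCurve

section CircleSums

lemma linearIndependent_circle_sub {a b c : Circle} (hab : a ≠ b) (hac : a ≠ c) (hbc : b ≠ c) :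
    LinearIndependent ℝ ![(a : ℂ) - c, (b : ℂ) - c] := by
  have haff : AffineIndependent ℝ ![(a : ℂ), b, c] :=
    EuclideanGeometry.Cospherical.affineIndependent_of_mem_of_ne
      (s := Metric.sphere (0 : ℂ) 1) ⟨0, 1, fun _ h => h⟩
      (by simp [Circle.norm_coe]) (by simp [Circle.norm_coe]) (by simp [Circle.norm_coe])
      (Circle.coe_injective.ne hab) (Circle.coe_injective.ne hac) (Circle.coe_injective.ne hbc)
  refine LinearIndependent.pair_iff.2 fun s t hst => ?_
  have hw := affineIndependent_iff.1 haff Finset.univ ![s, t, -(s + t)]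
    (by simp [Fin.sum_univ_three]) (by
      simp only [Fin.sum_univ_three, Matrix.cons_val]
      rw [← hst]
      module)
  exact ⟨hw 0 (Finset.mem_univ _), hw 1 (Finset.mem_univ _)⟩

/-- The tangent vectors `I * a`, `I * b`, `I * c` satisfy no nontrivial real relation with
coefficients summing to zero, so the map is a submersion at the origin. -/
lemma range_circle_perturbation_mem_nhds {a b c : Circle} (hab : a ≠ b) (hac : a ≠ c)
    (hbc : b ≠ c) (w : ℂ) :
    Set.range (fun θ : ℝ × ℝ => w + a * (Circle.exp θ.1 - 1) + b * (Circle.exp θ.2 - 1) +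
      c * (Circle.exp (-(θ.1 + θ.2)) - 1)) ∈ nhds w := by
  have hexp (z : ℂ) (L : ℝ × ℝ →L[ℝ] ℝ) : HasStrictFDerivAt
      (fun θ => z * ((Circle.exp (L θ) : ℂ) - 1)) (z • I • ofRealCLM.comp L) 0 :=
    ((((ofRealCLM.comp L).hasStrictFDerivAt (x := 0)).mul_const I).cexp.sub_const 1
      |>.const_mul z).congr_fderiv (by simp)
  let fst := ContinuousLinearMap.fst ℝ ℝ ℝ
  let snd := ContinuousLinearMap.snd ℝ ℝ ℝ
  let D : ℝ × ℝ →L[ℝ] ℂ := (a : ℂ) • I • ofRealCLM.comp fst + (b : ℂ) • I • ofRealCLM.comp snd +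
    (c : ℂ) • I • ofRealCLM.comp (-(fst + snd))
  let F : ℝ × ℝ → ℂ := fun θ => w + a * (Circle.exp θ.1 - 1) + b * (Circle.exp θ.2 - 1) +
    c * (Circle.exp (-(θ.1 + θ.2)) - 1)
  have hF : HasStrictFDerivAt F D 0 :=
    (((hexp a fst).const_add w).add (hexp b snd)).add (hexp c (-(fst + snd)))
  have hD (θ : ℝ × ℝ) : D θ = I * (θ.1 • ((a : ℂ) - c) + θ.2 • ((b : ℂ) - c)) := by
    simp only [D, fst, snd, ContinuousLinearMap.comp_add, ContinuousLinearMap.comp_neg,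
      smul_add, smul_neg, _root_.add_apply, _root_.neg_apply, _root_.smul_apply, neg_add_rev,
      ContinuousLinearMap.comp_apply, ContinuousLinearMap.coe_fst',
      ContinuousLinearMap.coe_snd', ofRealCLM_apply, smul_eq_mul, real_smul]
    ring
  have hinj : LinearMap.ker D.toLinearMap = ⊥ := LinearMap.ker_eq_bot'.2 fun θ hθ => by
    have h := LinearIndependent.pair_iff.1 (linearIndependent_circle_sub hab hac hbc) _ _
      ((mul_eq_zero.1 ((hD θ).symm.trans hθ)).resolve_left I_ne_zero)
    exact Prod.ext h.1 h.2
  have hmap := hF.map_nhds_eq_of_surj <| LinearMap.range_eq_top.2 <|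
    (LinearMap.injective_iff_surjective_of_finrank_eq_finrank (by simp)).1
      (LinearMap.ker_eq_bot.1 hinj)
  have h0 : F 0 = w := by simp [F]
  change Set.range F ∈ nhds w
  rw [← h0, ← hmap]
  exact Filter.range_mem_map

lemma circleExp_add_eq_circleExp_sub_iff (μ θ : ℝ) :
    Circle.exp (μ + θ) = Circle.exp (μ - θ) ↔ Real.sin θ = 0 := by
  rw [Circle.exp_eq_exp, Real.sin_eq_zero_iff]
  exact exists_congr fun m => ⟨fun h => by linarith, fun h => by linarith⟩

lemma circleExp_add_add_circleExp_sub (μ θ : ℝ) :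
    (Circle.exp (μ + θ) + Circle.exp (μ - θ) : ℂ) = 2 * Circle.exp μ * Real.cos θ := by
  simp only [Circle.coe_exp, ofReal_add, ofReal_sub, ofReal_cos, Complex.cos, add_mul, sub_mul,
    Complex.exp_add, Complex.exp_sub, Complex.exp_neg, neg_mul]
  ring

lemma exists_cos_add_cos_eq {x : ℝ} (hx : |x| < 1) :
    ∃ A B, Real.cos A + Real.cos B = 2 * x ∧ Real.cos A ≠ Real.cos B ∧ Real.sin A ≠ 0 := by
  obtain ⟨h₁, h₂⟩ := abs_lt.1 hx
  obtain ⟨ε, hε, h⟩ := exists_between (lt_min (sub_pos.2 h₂) (neg_lt_iff_pos_add.1 h₁))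
  obtain ⟨hε₁, hε₂⟩ := lt_min_iff.1 h
  refine ⟨Real.arccos (x + ε), Real.arccos (x - ε), ?_, ?_,
    (Real.sin_pos_of_pos_of_lt_pi (Real.arccos_pos.2 (by linarith))
      (Real.arccos_lt_pi.2 (by linarith))).ne'⟩ <;>
    rw [Real.cos_arccos (by linarith) (by linarith), Real.cos_arccos (by linarith) (by linarith)]
  · ring
  · linarith

/-- Writing `a, b = exp (i (μ ± δ))`, take `x, x' = exp (i (μ ± A))` and `y, y' = exp (i (μ ± B))`
with `cos A` and `cos B` symmetric about `cos δ`. -/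
lemma exists_circle_pairs_same_mul_add {a b : Circle} (hab : a ≠ b) :
    ∃ x x' y y' : Circle, x * x' = a * b ∧ y * y' = a * b ∧
      (x + x' + (y + y') : ℂ) = 2 * (a + b) ∧ x ≠ x' ∧ x ≠ y ∧ x' ≠ y := by
  obtain ⟨α, rfl⟩ := Circle.exp_surjective a
  obtain ⟨β, rfl⟩ := Circle.exp_surjective b
  obtain ⟨μ, δ, rfl, rfl⟩ : ∃ μ δ, α = μ + δ ∧ β = μ - δ :=
    ⟨(α + β) / 2, (α - β) / 2, by ring, by ring⟩
  have hmul (θ φ : ℝ) :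
      Circle.exp (μ + θ) * Circle.exp (μ - θ) = Circle.exp (μ + φ) * Circle.exp (μ - φ) := by
    rw [← Circle.exp_add, ← Circle.exp_add]
    ring_nf
  have hcos : |Real.cos δ| < 1 := by
    have hsin : Real.sin δ ≠ 0 := mt (circleExp_add_eq_circleExp_sub_iff μ δ).2 hab
    rw [← sq_lt_one_iff_abs_lt_one, Real.cos_sq']
    exact sub_lt_self _ (sq_pos_of_ne_zero hsin)
  obtain ⟨A, B, hAB, hAB_ne, hA⟩ := exists_cos_add_cos_eq hcos
  have hsum_ne : (Circle.exp (μ + A) + Circle.exp (μ - A) : ℂ) ≠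
      Circle.exp (μ + B) + Circle.exp (μ - B) := by
    simp only [circleExp_add_add_circleExp_sub]
    exact (mul_right_injective₀ (by simp)).ne (ofReal_injective.ne hAB_ne)
  refine ⟨Circle.exp (μ + A), Circle.exp (μ - A), Circle.exp (μ + B), Circle.exp (μ - B),
    hmul A δ, hmul B δ, ?_, mt (circleExp_add_eq_circleExp_sub_iff μ A).1 hA,
    fun h => hsum_ne ?_, fun h => hsum_ne ?_⟩
  · have hAB' : (Real.cos A + Real.cos B : ℂ) = 2 * Real.cos δ := by exact_mod_cast hAB
    simp only [circleExp_add_add_circleExp_sub]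
    linear_combination 2 * (Circle.exp μ : ℂ) * hAB'
  · have h' := hmul A B
    rw [h, mul_right_inj] at h'
    rw [h, h']
  · have h' := hmul A B
    rw [h, mul_comm, mul_right_inj] at h'
    rw [h, h', add_comm]

end CircleSums

section SumsWithProd

@[to_additive]
lemma prod_comp_update {ι α G : Type*} [Fintype ι] [DecidableEq ι] [CommGroup G] (f : α → G)
    (u : ι → α) (i : ι) (x : α) :
    ∏ j, f (Function.update u i x j) = (∏ j, f (u j)) * (f x / f (u i)) := by
  rw [← div_eq_iff_eq_mul', ← Finset.prod_div_distrib,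
    Fintype.prod_eq_single i fun j hj => by rw [Function.update_of_ne hj, div_self'],
    Function.update_self]

variable {ι : Type*} [Fintype ι]

/-- The sums of families of points of the unit circle, indexed by `ι`, with product `p`; as
multisets, these families are the spectra of the unitary matrices of determinant `p`. -/
def sumsWithProd (ι : Type*) [Fintype ι] (p : Circle) : Set ℂ :=
  {w | ∃ v : ι → Circle, ∏ j, v j = p ∧ ∑ j, (v j : ℂ) = w}

/-- Rotating three distinct entries by angles with sum zero already sweeps out a neighbourhood. -/
lemma sum_mem_interior_sumsWithProd_of_three {u : ι → Circle} {i j k : ι} (hij : u i ≠ u j)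
    (hik : u i ≠ u k) (hjk : u j ≠ u k) :
    ∑ m, (u m : ℂ) ∈ interior (sumsWithProd ι (∏ m, u m)) := by
  classical
  refine mem_interior_iff_mem_nhds.2 <| Filter.mem_of_superset
    (range_circle_perturbation_mem_nhds hij hik hjk _) <| Set.range_subset_iff.2 fun θ => ?_
  have hj := ne_of_apply_ne u hij
  have hk := ne_of_apply_ne u hik
  have hk' := ne_of_apply_ne u hjk
  refine ⟨Function.update (Function.update (Function.update u i (u i * Circle.exp θ.1))
    j (u j * Circle.exp θ.2)) k (u k * Circle.exp (-(θ.1 + θ.2))), ?_, ?_⟩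
  · simp [prod_comp_update fun z => z, hj.symm, hk.symm, hk'.symm, mul_assoc]
  · simp only [sum_comp_update fun z : Circle => (z : ℂ), Circle.coe_mul, ne_eq, hj.symm, hk.symm,
      hk'.symm, not_false_eq_true, Function.update_of_ne]
    ring

lemma sum_mem_interior_sumsWithProd_of_pairs {u : ι → Circle} {i j k l : ι} (hij : u i ≠ u j)
    (hki : k ≠ i) (hlj : l ≠ j) (hk : u k = u i) (hl : u l = u j) :
    ∑ m, (u m : ℂ) ∈ interior (sumsWithProd ι (∏ m, u m)) := by
  classical
  obtain ⟨x, x', y, y', hx, hy, hsum, hxx', hxy, hx'y⟩ := exists_circle_pairs_same_mul_add hij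
  have hji : j ≠ i := ne_of_apply_ne u hij.symm
  have hkj : k ≠ j := ne_of_apply_ne u (hk ▸ hij)
  have hli : l ≠ i := ne_of_apply_ne u (hl ▸ hij.symm)
  have hlk : l ≠ k := ne_of_apply_ne u (hl ▸ hk ▸ hij.symm)
  set v := Function.update (Function.update (Function.update (Function.update u i x) j x') k y) l y'
  have hprod : ∏ m, v m = ∏ m, u m := by
    simp only [v, prod_comp_update fun z => z, ne_eq, hji, hkj, hli, hlk, hki, hlj, hk, hl,
      not_false_eq_true, Function.update_of_ne]
    rw [mul_assoc _ (y / _), mul_assoc _ (x / _), div_mul_div_comm, div_mul_div_comm, hx, hy]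
    simp
  have hsum' : ∑ m, (v m : ℂ) = ∑ m, (u m : ℂ) := by
    simp only [v, sum_comp_update fun z : Circle => (z : ℂ), ne_eq, hji, hkj, hli, hlk, hki, hlj,
      hk, hl, not_false_eq_true, Function.update_of_ne]
    linear_combination hsum
  rw [← hprod, ← hsum']
  apply sum_mem_interior_sumsWithProd_of_three (i := i) (j := j) (k := k) <;>
    simpa [v, Function.update_apply, hji, hji.symm, hkj, hkj.symm, hli.symm, hlk.symm, hki.symm,
      hlj.symm]

lemma forall_ne_eq_or_three_or_pairs {ι α : Type*} [Nonempty ι] (u : ι → α) :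
    (∃ i a, ∀ k ≠ i, u k = a) ∨
    (∃ i j k, u i ≠ u j ∧ u i ≠ u k ∧ u j ≠ u k) ∨
    ∃ i j k l, u i ≠ u j ∧ k ≠ i ∧ l ≠ j ∧ u k = u i ∧ u l = u j := by
  by_contra! ⟨hone, hthree, hpairs⟩
  obtain ⟨i⟩ := ‹Nonempty ι›
  obtain ⟨j, -, hji⟩ := hone i (u i)
  obtain ⟨k, hki, hkj⟩ := hone i (u j)
  obtain ⟨l, hlj, hli⟩ := hone j (u i)
  grind

end SumsWithProd

section NormalizedMeanPow

variable {ι : Type*} [Fintype ι]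

/-- The `n`-th power of the mean of `u`, divided by the product of `u`, where `n` is the number of
entries. It is the diagonal product, divided by the determinant, of a unitary matrix with constant
diagonal and eigenvalues `u`. -/
noncomputable def normalizedMeanPow (u : ι → Circle) : ℂ :=
  (∏ j, u j : Circle)⁻¹ * ((∑ j, (u j : ℂ)) / Fintype.card ι) ^ Fintype.card ι

lemma isCompact_range_normalizedMeanPow : IsCompact (Set.range (normalizedMeanPow (ι := ι))) := by
  refine isCompact_range ?_
  unfold normalizedMeanPow
  fun_prop

lemma normalizedMeanPow_update_const [DecidableEq ι] (i : ι) (α : ℝ) (b : Circle) :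
    normalizedMeanPow (Function.update (fun _ => Circle.exp α * b) i b) =
      boundaryCurve (Fintype.card ι) α := by
  have hn : (Fintype.card ι : ℂ) ≠ 0 := by
    exact_mod_cast (Fintype.card_pos_iff.2 ⟨i⟩).ne'
  have he : (Circle.exp α : ℂ) ≠ 0 := Circle.coe_ne_zero _
  have hb : (b : ℂ) ≠ 0 := Circle.coe_ne_zero _
  have hprod : ((∏ j, Function.update (fun _ => Circle.exp α * b) i b j : Circle) : ℂ)⁻¹ =
      Circle.exp α / (Circle.exp α * b) ^ Fintype.card ι := by
    rw [prod_comp_update fun z => z]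
    simp [div_eq_mul_inv]
  have hmean : (∑ j, (Function.update (fun _ => Circle.exp α * b) i b j : ℂ)) / Fintype.card ι =
      Circle.exp α * b * (1 - (1 - (Circle.exp α : ℂ)⁻¹) / Fintype.card ι) := by
    rw [sum_comp_update fun z : Circle => (z : ℂ)]
    generalize Circle.exp α = e at he
    simp only [Finset.sum_const, Finset.card_univ, nsmul_eq_mul, Circle.coe_mul]
    field_simp
    ring
  rw [normalizedMeanPow, Circle.coe_inv, hprod, hmean, boundaryCurve_eq_circleExp,
    mul_pow (_ * _) (1 - _), ← mul_assoc, div_mul_cancel₀ _ (pow_ne_zero _ (mul_ne_zero he hb))]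

lemma range_boundaryCurve_subset_range_normalizedMeanPow [Nonempty ι] :
    Set.range (boundaryCurve (Fintype.card ι)) ⊆ Set.range (normalizedMeanPow (ι := ι)) := by
  classical
  rintro _ ⟨α, rfl⟩
  exact ⟨_, normalizedMeanPow_update_const (Classical.arbitrary ι) α 1⟩

lemma normalizedMeanPow_mem_range_boundaryCurve {u : ι → Circle} {i : ι} {a : Circle}
    (h : ∀ k ≠ i, u k = a) :
    normalizedMeanPow u ∈ Set.range (boundaryCurve (Fintype.card ι)) := by
  classical
  obtain ⟨α, hα⟩ := Circle.exp_surjective (a / u i)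
  have hu : u = Function.update (fun _ => Circle.exp α * u i) i (u i) :=
    Function.eq_update_iff.2 ⟨rfl, fun k hk => by rw [h k hk, hα, div_mul_cancel]⟩
  exact ⟨α, by rw [hu, normalizedMeanPow_update_const]⟩

lemma isOpenMap_mul_div_pow {c d : ℂ} (hc : c ≠ 0) (hd : d ≠ 0) {m : ℕ} [NeZero m] :
    IsOpenMap fun w : ℂ => c * (w / d) ^ m := by
  simp only [div_eq_mul_inv]
  exact (Homeomorph.mulLeft₀ c hc).isOpenMap.comp <|
    (isOpenQuotientMap_pow m).isOpenMap.comp (Homeomorph.mulRight₀ d⁻¹ (inv_ne_zero hd)).isOpenMap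

lemma normalizedMeanPow_mem_interior_range [Nonempty ι] {u : ι → Circle}
    (h : ∑ j, (u j : ℂ) ∈ interior (sumsWithProd ι (∏ j, u j))) :
    normalizedMeanPow u ∈ interior (Set.range (normalizedMeanPow (ι := ι))) := by
  have hopen := isOpenMap_mul_div_pow (m := Fintype.card ι)
    (Circle.coe_ne_zero (∏ j, u j)⁻¹) (Nat.cast_ne_zero.2 (Fintype.card_ne_zero (α := ι)))
  refine interior_maximal ?_ (hopen _ isOpen_interior) (Set.mem_image_of_mem _ h)
  rintro _ ⟨w, hw, rfl⟩
  obtain ⟨v, hv, rfl⟩ := interior_subset hw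
  exact ⟨v, by rw [normalizedMeanPow, hv]⟩

lemma frontier_range_normalizedMeanPow_subset [Nonempty ι] :
    frontier (Set.range (normalizedMeanPow (ι := ι))) ⊆
      Set.range (boundaryCurve (Fintype.card ι)) := by
  intro z hz
  obtain ⟨u, rfl⟩ := isCompact_range_normalizedMeanPow.isClosed.frontier_subset hz
  rcases forall_ne_eq_or_three_or_pairs u with
    ⟨i, a, h⟩ | ⟨i, j, k, hij, hik, hjk⟩ | ⟨i, j, k, l, hij, hki, hlj, hk, hl⟩
  · exact normalizedMeanPow_mem_range_boundaryCurve h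
  · exact absurd (normalizedMeanPow_mem_interior_range
      (sum_mem_interior_sumsWithProd_of_three hij hik hjk)) hz.2
  · exact absurd (normalizedMeanPow_mem_interior_range
      (sum_mem_interior_sumsWithProd_of_pairs hij hki hlj hk hl)) hz.2

end NormalizedMeanPow

section RootsOfUnity

lemma sum_stdAddChar_mul {n : ℕ} [NeZero n] (b : ZMod n) :
    ∑ x : ZMod n, ZMod.stdAddChar (x * b) = if b = 0 then (n : ℂ) else 0 := by
  simpa using AddChar.sum_mulShift b (ZMod.isPrimitive_stdAddChar n)

lemma zero_mem_range_normalizedMeanPow {ι : Type*} [Fintype ι] (h : 2 ≤ Fintype.card ι) :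
    0 ∈ Set.range (normalizedMeanPow (ι := ι)) := by
  have : NeZero (Fintype.card ι) := ⟨by lia⟩
  have : Fact (1 < Fintype.card ι) := ⟨h⟩
  let e : ι ≃ ZMod (Fintype.card ι) := Fintype.equivOfCardEq (ZMod.card _).symm
  have hsum : ∑ j, (ZMod.toCircle (e j) : ℂ) = 0 := by
    rw [e.sum_comp fun x => (ZMod.toCircle x : ℂ)]
    simpa [ZMod.stdAddChar_apply] using sum_stdAddChar_mul (1 : ZMod (Fintype.card ι))
  exact ⟨fun j => ZMod.toCircle (e j), by simp [normalizedMeanPow, hsum, NeZero.ne]⟩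

end RootsOfUnity

section UnitaryMatrices

variable {ι : Type*} [Fintype ι] [DecidableEq ι]

/-- The image of `SU(ι)` under the diagonal product `Πd`. -/
def diagonalProducts (ι : Type*) [Fintype ι] [DecidableEq ι] : Set ℂ :=
  {z | ∃ U ∈ specialUnitaryGroup ι ℂ, ∏ j, U j j = z}

lemma diagonal_circle_mem_unitaryGroup (u : ι → Circle) :
    diagonal (fun j => (u j : ℂ)) ∈ unitaryGroup ι ℂ := by
  rw [mem_unitaryGroup_iff, star_eq_conjTranspose, diagonal_conjTranspose, diagonal_mul_diagonal,
    ← diagonal_one]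
  congr 1
  ext j
  simp [mul_conj, Circle.normSq_coe]

open scoped Matrix.Norms.L2Operator in
lemma norm_eq_one_of_mem_roots_charpoly {U : Matrix ι ι ℂ} (hU : U ∈ unitaryGroup ι ℂ) {μ : ℂ}
    (hμ : μ ∈ U.charpoly.roots) : ‖μ‖ = 1 :=
  mem_sphere_zero_iff_norm.1 <| spectrum.subset_circle_of_unitary hU <|
    mem_spectrum_iff_isRoot_charpoly.2 (Polynomial.mem_roots'.1 hμ).2

lemma exists_circle_prod_eq_det_sum_eq_trace {U : Matrix ι ι ℂ} (hU : U ∈ unitaryGroup ι ℂ) :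
    ∃ u : ι → Circle, (∏ j, u j : Circle) = U.det ∧ ∑ j, (u j : ℂ) = U.trace := by
  have hcard : Fintype.card ι = Fintype.card U.charpoly.roots := by
    rw [Multiset.card_coe, ← (IsAlgClosed.splits U.charpoly).natDegree_eq_card_roots,
      charpoly_natDegree_eq_dim]
  let e : ι ≃ U.charpoly.roots := Fintype.equivOfCardEq hcard
  have hmem (j : ι) : (e j : ℂ) ∈ U.charpoly.roots := Multiset.coe_mem
  have hnorm (j : ι) : ‖(e j : ℂ)‖ = 1 := norm_eq_one_of_mem_roots_charpoly hU (hmem j)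
  refine ⟨fun j => ⟨e j, mem_sphere_zero_iff_norm.2 (hnorm j)⟩, ?_, ?_⟩
  · rw [det_eq_prod_roots_charpoly, Multiset.prod_eq_prod_coe, ← e.prod_comp]
    exact map_prod Circle.coeHom _ _
  · rw [trace_eq_sum_roots_charpoly, Multiset.sum_eq_sum_coe, ← e.sum_comp]

/-- The normalised Fourier matrix of the cyclic group of order `card ι`. -/
lemma exists_mem_unitaryGroup_normSq_eq_inv_card [Nonempty ι] :
    ∃ F ∈ unitaryGroup ι ℂ, ∀ j k, F j k * star (F j k) = (Fintype.card ι : ℂ)⁻¹ := by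
  set n := Fintype.card ι
  have hn : (n : ℂ) ≠ 0 := Nat.cast_ne_zero.2 Fintype.card_ne_zero
  let e : ι ≃ ZMod n := Fintype.equivOfCardEq (ZMod.card n).symm
  let F : Matrix ι ι ℂ := fun j k => (√n : ℂ)⁻¹ * ZMod.stdAddChar (e k * e j)
  have hF (j k l : ι) : F j k * star (F l k) = (n : ℂ)⁻¹ * ZMod.stdAddChar (e k * (e j - e l)) := by
    have hstar (x : ZMod n) : star (ZMod.stdAddChar x : ℂ) = ZMod.stdAddChar (-x) := by
      rw [ZMod.stdAddChar_apply, ZMod.stdAddChar_apply, AddChar.map_neg_eq_inv,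
        Circle.coe_inv_eq_conj]
      rfl
    have hsqrt : star (√n : ℂ)⁻¹ = (√n : ℂ)⁻¹ := by
      rw [← ofReal_inv]
      exact conj_ofReal _
    have hsq : (√n : ℂ)⁻¹ * (√n : ℂ)⁻¹ = (n : ℂ)⁻¹ := by
      rw [← mul_inv, ← ofReal_mul, Real.mul_self_sqrt n.cast_nonneg, ofReal_natCast]
    rw [star_mul', hstar, hsqrt, mul_mul_mul_comm, hsq, ← AddChar.map_add_eq_mul]
    ring_nf
  refine ⟨F, mem_unitaryGroup_iff.2 <| Matrix.ext fun j l => ?_, fun j k => by rw [hF]; simp⟩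
  simp only [mul_apply, star_apply, hF]
  rw [← Finset.mul_sum, e.sum_comp fun x => (ZMod.stdAddChar (x * (e j - e l)) : ℂ),
    sum_stdAddChar_mul, one_apply]
  simp [sub_eq_zero, hn]

lemma inv_det_mul_prod_diag_mem_diagonalProducts [Nonempty ι] {U : Matrix ι ι ℂ}
    (hU : U ∈ unitaryGroup ι ℂ) : U.det⁻¹ * ∏ j, U j j ∈ diagonalProducts ι := by
  obtain ⟨i⟩ := ‹Nonempty ι›
  obtain ⟨u, hdet, -⟩ := exists_circle_prod_eq_det_sum_eq_trace hU
  let v : ι → Circle := Function.update 1 i (∏ j, u j)⁻¹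
  have hv : ∏ j, (v j : ℂ) = U.det⁻¹ := by
    calc ∏ j, (v j : ℂ) = (∏ j, v j : Circle) := (map_prod Circle.coeHom _ _).symm
      _ = U.det⁻¹ := by simp [v, prod_comp_update fun z => z, ← hdet]
  refine ⟨diagonal (fun j => (v j : ℂ)) * U, mem_specialUnitaryGroup_iff.2
    ⟨mul_mem (diagonal_circle_mem_unitaryGroup v) hU, ?_⟩, ?_⟩
  · rw [det_mul, det_diagonal, hv, ← hdet, inv_mul_cancel₀ (Circle.coe_ne_zero _)]
  · simp only [diagonal_mul, Finset.prod_mul_distrib, hv]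

/-- Conjugating `diagonal u` by the Fourier matrix makes its diagonal constant. -/
lemma normalizedMeanPow_mem_diagonalProducts [Nonempty ι] (u : ι → Circle) :
    normalizedMeanPow u ∈ diagonalProducts ι := by
  obtain ⟨F, hF, hnormSq⟩ := exists_mem_unitaryGroup_normSq_eq_inv_card (ι := ι)
  set U := F * diagonal (fun j => (u j : ℂ)) * star F with hU
  have hdiag (j : ι) : U j j = (∑ k, (u k : ℂ)) / Fintype.card ι := by
    rw [hU, mul_apply, Finset.sum_div]
    refine Finset.sum_congr rfl fun k _ => ?_
    rw [mul_diagonal, star_apply, mul_right_comm, hnormSq, div_eq_inv_mul]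
  have hdet : U.det = (∏ j, u j : Circle) := by
    rw [hU, det_mul, mul_comm, ← det_mul, ← mul_assoc, mem_unitaryGroup_iff'.1 hF, one_mul,
      det_diagonal]
    exact (map_prod Circle.coeHom _ _).symm
  have hmem := inv_det_mul_prod_diag_mem_diagonalProducts
    (mul_mem (mul_mem hF (diagonal_circle_mem_unitaryGroup u)) (Unitary.star_mem hF))
  rw [← hU] at hmem
  simpa only [hdet, hdiag, normalizedMeanPow, Circle.coe_inv, Finset.prod_const, Finset.card_univ]
    using hmem

lemma prod_le_mean_pow {ι : Type*} [Fintype ι] [Nonempty ι] {a : ι → ℝ} (ha : ∀ j, 0 ≤ a j) :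
    ∏ j, a j ≤ ((∑ j, a j) / Fintype.card ι) ^ Fintype.card ι := by
  have hprod : 0 ≤ ∏ j, a j := Finset.prod_nonneg fun j _ => ha j
  have h := Real.geom_mean_le_arith_mean Finset.univ (fun _ => 1) a (fun _ _ => zero_le_one)
    (by simp [Fintype.card_pos]) (fun j _ => ha j)
  simp only [Real.rpow_one, one_mul, Finset.sum_const, Finset.card_univ, nsmul_eq_mul,
    mul_one] at h
  calc ∏ j, a j = ((∏ j, a j) ^ (Fintype.card ι : ℝ)⁻¹) ^ Fintype.card ι :=
        (Real.rpow_inv_natCast_pow hprod Fintype.card_ne_zero).symm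
    _ ≤ _ := pow_le_pow_left₀ (Real.rpow_nonneg hprod _) h _

/-- Rotating each row so that its diagonal entry becomes nonnegative does not change the product
of the diagonal divided by the determinant; the ratio `r` is then bounded by AM-GM. -/
lemma exists_smul_normalizedMeanPow_eq [Nonempty ι] {z : ℂ} (hz : z ∈ diagonalProducts ι) :
    ∃ r ∈ Set.Icc (0 : ℝ) 1, ∃ u : ι → Circle, r • normalizedMeanPow u = z := by
  obtain ⟨U, hU, rfl⟩ := hz
  obtain ⟨hU, hdet⟩ := mem_specialUnitaryGroup_iff.1 hU
  let phase (j : ι) : Circle := Circle.exp (U j j).arg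
  have hphase (j : ι) : U j j = ‖U j j‖ * phase j := (norm_mul_exp_arg_mul_I _).symm
  obtain ⟨u, hprod, hsum⟩ := exists_circle_prod_eq_det_sum_eq_trace
    (mul_mem (diagonal_circle_mem_unitaryGroup fun j => (phase j)⁻¹) hU)
  rw [det_mul, det_diagonal, hdet, mul_one] at hprod
  have htrace : ∑ j, (u j : ℂ) = (∑ j, ‖U j j‖ : ℝ) := by
    rw [hsum, trace, ofReal_sum]
    refine Finset.sum_congr rfl fun j _ => ?_
    rw [diag_apply, diagonal_mul, Circle.coe_inv, inv_mul_eq_iff_eq_mul₀ (Circle.coe_ne_zero _),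
      mul_comm]
    exact hphase j
  set m := ((∑ j, ‖U j j‖) / Fintype.card ι) ^ Fintype.card ι with hm
  have hle : ∏ j, ‖U j j‖ ≤ m := prod_le_mean_pow fun j => norm_nonneg (U j j)
  have h0 : 0 ≤ ∏ j, ‖U j j‖ := Finset.prod_nonneg fun j _ => norm_nonneg _
  have hvalue : normalizedMeanPow u = m * ∏ j, (phase j : ℂ) := by
    rw [normalizedMeanPow, Circle.coe_inv, hprod, htrace, hm]
    simp [mul_comm]
  refine ⟨(∏ j, ‖U j j‖) / m, ⟨div_nonneg h0 (h0.trans hle), div_le_one_of_le₀ hle (h0.trans hle)⟩,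
    u, ?_⟩
  rw [hvalue, real_smul, ← mul_assoc, ← ofReal_mul,
    div_mul_cancel_of_imp fun h => h0.antisymm' (hle.trans_eq h), ofReal_prod,
    ← Finset.prod_mul_distrib]
  exact Finset.prod_congr rfl fun j _ => (hphase j).symm

lemma diagonalProducts_eq_range_normalizedMeanPow [Nonempty ι]
    (hstar : StarConvex ℝ 0 (Set.range (normalizedMeanPow (ι := ι)))) :
    diagonalProducts ι = Set.range (normalizedMeanPow (ι := ι)) := by
  refine Set.Subset.antisymm (fun z hz => ?_)
    (Set.range_subset_iff.2 normalizedMeanPow_mem_diagonalProducts)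
  obtain ⟨r, hr, u, rfl⟩ := exists_smul_normalizedMeanPow_eq hz
  exact starConvex_zero_iff.1 hstar (Set.mem_range_self u) hr.1 hr.2

end UnitaryMatrices

section AtMostTwo

lemma frontier_eq_self_of_subset_range_ofReal {S : Set ℂ} (hS : IsClosed S)
    (hreal : S ⊆ Set.range ((↑) : ℝ → ℂ)) : frontier S = S := by
  have him : S ⊆ {z | z.im ≤ 0} := fun z hz => by
    obtain ⟨x, rfl⟩ := hreal hz
    exact (ofReal_im x).le
  have hint : interior S = ∅ := Set.eq_empty_of_forall_notMem fun z hz => by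
    have hlt := interior_mono him hz
    obtain ⟨x, rfl⟩ := hreal (interior_subset hz)
    rw [Complex.interior_setOfPred_im_le] at hlt
    exact hlt.ne (ofReal_im x)
  rw [hS.frontier_eq, hint, Set.sdiff_empty]

lemma range_boundaryCurve_one : Set.range (boundaryCurve 1) = {1} := by
  have h : boundaryCurve 1 = fun _ => 1 := by
    ext α
    simp [boundaryCurve_eq_circleExp]
  rw [h, Set.range_const]

lemma boundaryCurve_two (α : ℝ) : boundaryCurve 2 α = ((1 + Real.cos α) / 2 : ℝ) := by
  have h : (Circle.exp α : ℂ) ≠ 0 := Circle.coe_ne_zero _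
  have hcos : (Real.cos α : ℂ) = (Circle.exp α + (Circle.exp α : ℂ)⁻¹) / 2 := by
    rw [ofReal_cos, Complex.cos, neg_mul, Complex.exp_neg, Circle.coe_exp]
  rw [boundaryCurve_eq_circleExp, ofReal_div, ofReal_add, hcos]
  generalize (Circle.exp α : ℂ) = e at h
  push_cast
  field_simp
  ring

lemma range_boundaryCurve_two : Set.range (boundaryCurve 2) = (↑) '' Set.Icc (0 : ℝ) 1 := by
  ext z
  constructor
  · rintro ⟨α, rfl⟩
    rw [boundaryCurve_two]
    exact ⟨_, ⟨by linarith [Real.neg_one_le_cos α], by linarith [Real.cos_le_one α]⟩, rfl⟩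
  · rintro ⟨r, hr, rfl⟩
    refine ⟨Real.arccos (2 * r - 1), ?_⟩
    rw [boundaryCurve_two, Real.cos_arccos (by linarith [hr.1]) (by linarith [hr.2])]
    ring_nf

lemma starConvex_range_boundaryCurve_two : StarConvex ℝ 0 (Set.range (boundaryCurve 2)) := by
  rw [range_boundaryCurve_two]
  refine starConvex_zero_iff.2 ?_
  rintro _ ⟨s, hs, rfl⟩ r hr₀ hr₁
  exact ⟨r * s, ⟨mul_nonneg hr₀ hs.1, mul_le_one₀ hr₁ hs.1 hs.2⟩, by simp⟩

lemma range_boundaryCurve_subset_range_ofReal {n : ℕ} (h₁ : 1 ≤ n) (h₂ : n ≤ 2) :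
    Set.range (boundaryCurve n) ⊆ Set.range ((↑) : ℝ → ℂ) := by
  interval_cases n
  · rw [range_boundaryCurve_one]
    exact Set.singleton_subset_iff.2 ⟨1, ofReal_one⟩
  · rw [range_boundaryCurve_two]
    exact Set.image_subset_range _ _

variable {ι : Type*} [Fintype ι]

lemma range_normalizedMeanPow_of_card_le_two [Nonempty ι] (h : Fintype.card ι ≤ 2) :
    Set.range (normalizedMeanPow (ι := ι)) = Set.range (boundaryCurve (Fintype.card ι)) := by
  refine Set.Subset.antisymm (Set.range_subset_iff.2 fun u => ?_)
    range_boundaryCurve_subset_range_normalizedMeanPow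
  have hthree (i j k : ι) (hij : i ≠ j) (hik : i ≠ k) (hjk : j ≠ k) : False :=
    (Fintype.two_lt_card_iff.2 ⟨i, j, k, hij, hik, hjk⟩).not_ge h
  rcases forall_ne_eq_or_three_or_pairs u with
    ⟨i, a, hu⟩ | ⟨i, j, k, hij, hik, hjk⟩ | ⟨i, j, k, -, hij, hki, -, hk, -⟩
  · exact normalizedMeanPow_mem_range_boundaryCurve hu
  · exact (hthree i j k (ne_of_apply_ne u hij) (ne_of_apply_ne u hik) (ne_of_apply_ne u hjk)).elim
  · exact (hthree i j k (ne_of_apply_ne u hij) hki.symm (ne_of_apply_ne u (hk ▸ hij.symm))).elim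

variable [DecidableEq ι]

lemma diagonalProducts_eq_singleton_of_card_eq_one (h : Fintype.card ι = 1) :
    diagonalProducts ι = {1} := by
  obtain ⟨i, hi⟩ := Fintype.card_eq_one_iff.1 h
  have : Unique ι := ⟨⟨i⟩, hi⟩
  refine Set.Subset.antisymm ?_ (Set.singleton_subset_iff.2 ⟨1, one_mem _, by simp⟩)
  rintro _ ⟨U, hU, rfl⟩
  have hdet := (mem_specialUnitaryGroup_iff.1 hU).2
  rwa [det_unique, ← Fintype.prod_unique fun j => U j j] at hdet

lemma diagonalProducts_eq_range_boundaryCurve_of_card_le_two [Nonempty ι]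
    (h : Fintype.card ι ≤ 2) :
    diagonalProducts ι = Set.range (boundaryCurve (Fintype.card ι)) := by
  rcases (Nat.succ_le_of_lt (Fintype.card_pos (α := ι))).eq_or_lt' with h₁ | h₁
  · rw [diagonalProducts_eq_singleton_of_card_eq_one h₁, h₁, range_boundaryCurve_one]
  · have hrange := range_normalizedMeanPow_of_card_le_two h
    rw [← hrange]
    apply diagonalProducts_eq_range_normalizedMeanPow
    rw [hrange, h.antisymm h₁]
    exact starConvex_range_boundaryCurve_two

end AtMostTwo

theorem diagonalProduct_specialUnitaryGroup_isCompact_frontier_general {ι : Type*} [Fintype ι]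
    [DecidableEq ι] [Nonempty ι] : IsCompact (diagonalProducts ι) ∧
      frontier (diagonalProducts ι) = boundaryCurve (Fintype.card ι) '' Set.Icc (-π) π := by
  rw [image_boundaryCurve_Icc]
  have hcompact := isCompact_range_normalizedMeanPow (ι := ι)
  rcases le_or_gt (Fintype.card ι) 2 with h | h
  · rw [range_normalizedMeanPow_of_card_le_two h] at hcompact
    rw [diagonalProducts_eq_range_boundaryCurve_of_card_le_two h]
    exact ⟨hcompact, frontier_eq_self_of_subset_range_ofReal hcompact.isClosed
      (range_boundaryCurve_subset_range_ofReal Fintype.card_pos h)⟩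
  · have hfrontier := frontier_range_normalizedMeanPow_subset (ι := ι)
    have hray := eq_one_of_smul_mem_range_boundaryCurve h
    rw [diagonalProducts_eq_range_normalizedMeanPow <| starConvex_zero_of_frontier_subset
      hcompact.isClosed (zero_mem_range_normalizedMeanPow h.le) hfrontier hray]
    exact ⟨hcompact, frontier_eq_of_frontier_subset hcompact.isBounded
      range_boundaryCurve_subset_range_normalizedMeanPow hfrontier hray⟩

/-- The image `Πd(SU(n))` is a compact subset of `ℂ` whose topological frontier equals
the image of the curve `γ(α) = e^{iα}(1 − (1 − e^{−iα})/n)ⁿ`, `α ∈ [−π, π]`. -/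
theorem diagonalProduct_specialUnitaryGroup_isCompact_frontier (n : ℕ) (hn : 1 ≤ n) :
    IsCompact {z : ℂ | ∃ U ∈ Matrix.specialUnitaryGroup (Fin n) ℂ, (∏ j, U j j) = z} ∧
    frontier {z : ℂ | ∃ U ∈ Matrix.specialUnitaryGroup (Fin n) ℂ, (∏ j, U j j) = z} =
      (fun α : ℝ => Complex.exp (Complex.I * α) *
        (1 - (1 - Complex.exp (-(Complex.I * α))) / n) ^ n) '' Set.Icc (-π) π := by
  have : Nonempty (Fin n) := Fin.pos_iff_nonempty.1 hn
  have h := diagonalProduct_specialUnitaryGroup_isCompact_frontier_general (ι := Fin n)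
  rw [Fintype.card_fin] at h
  exact h
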